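/- Let f₁, f₂, f₃ be the standard basis vectors of ℝ³, let T₁ = conv{0, f₂, f₃}, T₂ = conv{0, f₁, f₃}, T₃ = conv{0, f₁, f₂}, and let P = T₁ + T₂ + T₃ (Minkowski sum). Then A(P,z) = 4 for every nonzero z ∈ ℝ³. -/

import Mathlib

open scoped Pointwise BigOperators

noncomputable section

/-- Scalar product on `ℝ^d`. -/
def dotp {d : ℕ} (z x : Fin d → ℝ) : ℝ := ∑ i, z i * x i

/-- Number of vertices (extreme points) of a set. -/
def nVert {d : ℕ} (S : Set (Fin d → ℝ)) : ℕ := (Set.extremePoints ℝ S).ncard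

/-- `t⁻ = min {z·x : x ∈ P}`. -/
def tMin {d : ℕ} (P : Set (Fin d → ℝ)) (z : Fin d → ℝ) : ℝ := sInf (dotp z '' P)

/-- `t⁺ = max {z·x : x ∈ P}`. -/
def tMax {d : ℕ} (P : Set (Fin d → ℝ)) (z : Fin d → ℝ) : ℝ := sSup (dotp z '' P)

/-- `A(P,z)`: the average number of vertices of the sections `P ∩ {x : z·x = t}`
over `t ∈ [t⁻, t⁺]`. -/
def avgVert {d : ℕ} (P : Set (Fin d → ℝ)) (z : Fin d → ℝ) : ℝ :=
  (tMax P z - tMin P z)⁻¹ *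
    ∫ t in tMin P z..tMax P z, ((nVert (P ∩ {x | dotp z x = t}) : ℝ))

/-- A convex polytope: the convex hull of a finite point set. -/
def IsPolytope {d : ℕ} (P : Set (Fin d → ℝ)) : Prop :=
  ∃ s : Finset (Fin d → ℝ), P = convexHull ℝ (s : Set (Fin d → ℝ))

/-- The vectors are nonzero and pairwise linearly independent. -/
def PairwiseIndep {d n : ℕ} (a : Fin n → (Fin d → ℝ)) : Prop :=
  (∀ i, a i ≠ 0) ∧ ∀ i j, i ≠ j → ∀ c : ℝ, a j ≠ c • a i

/-- A zonotope: a translate of a Minkowski sum of segments `[0, aᵢ]` with pairwise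
linearly independent nonzero generators. -/
def IsZonotope {d : ℕ} (P : Set (Fin d → ℝ)) : Prop :=
  ∃ (n : ℕ) (a : Fin n → (Fin d → ℝ)) (x : Fin d → ℝ),
    PairwiseIndep a ∧ P = {x} + ∑ i, segment ℝ 0 (a i)

/-- Central symmetry: there is `c` with `2c - P = P`. -/
def CentSymm {d : ℕ} (P : Set (Fin d → ℝ)) : Prop :=
  ∃ c : Fin d → ℝ, (fun y => (2 : ℝ) • c - y) '' P = P

/-- An edge of the hypergraph `ℱ` on the generator set `V`: a subset `W ⊆ V` spanning
a 2-dimensional subspace, maximal with this property. -/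
def IsHEdge (V W : Finset (Fin 3 → ℝ)) : Prop :=
  W ⊆ V ∧ Module.finrank ℝ (Submodule.span ℝ (W : Set (Fin 3 → ℝ))) = 2 ∧
    ∀ v ∈ V, v ∉ W →
      Module.finrank ℝ (Submodule.span ℝ (insert v (W : Set (Fin 3 → ℝ)))) = 3

/-- The degree of `v` in the hypergraph `ℱ` on `V`: the number of edges containing `v`. -/
def degF (V : Finset (Fin 3 → ℝ)) (v : Fin 3 → ℝ) : ℕ :=
  {W : Finset (Fin 3 → ℝ) | IsHEdge V W ∧ v ∈ W}.ncard

/-- The set of edges of the polytope `P` that are parallel to `v`: one-dimensional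
exposed faces `[u,w]` of `P` with `w - u` a nonzero multiple of `v`. -/
def edgesParallel {d : ℕ} (P : Set (Fin d → ℝ)) (v : Fin d → ℝ) : Set (Set (Fin d → ℝ)) :=
  {e | ∃ u w : Fin d → ℝ, u ≠ w ∧ e = segment ℝ u w ∧
    (∃ y : Fin d → ℝ, y ≠ 0 ∧ e = {x ∈ P | ∀ p ∈ P, dotp y p ≤ dotp y x}) ∧
    ∃ c : ℝ, c ≠ 0 ∧ w - u = c • v}

open MeasureTheory

def cC : Fin 7 → Fin 3 → ℤ :=
  ![![1,0,0], ![0,1,0], ![0,0,1], ![-1,0,0], ![0,-1,0], ![0,0,-1], ![-1,-1,-1]]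
def cB : Fin 7 → ℤ := ![0,0,0,2,2,2,3]
def cU : Fin 15 → Fin 3 → ℤ :=
  ![![0,0,0], ![0,0,0], ![0,0,0], ![0,2,0], ![0,0,2], ![2,0,0], ![0,0,2], ![2,0,0], ![0,2,0],
    ![2,1,0], ![1,2,0], ![1,0,2], ![0,2,1], ![2,0,1], ![2,1,0]]
def cW : Fin 15 → Fin 3 → ℤ :=
  ![![0,0,2], ![0,2,0], ![2,0,0], ![0,2,1], ![0,1,2], ![2,0,1], ![1,0,2], ![2,1,0], ![1,2,0],
    ![2,0,1], ![0,2,1], ![0,1,2], ![0,1,2], ![1,0,2], ![1,2,0]]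
def cGi (k : Fin 7) (v : Fin 3 → ℤ) : ℤ := cB k + (cC k 0 * v 0 + cC k 1 * v 1 + cC k 2 * v 2)
def cG (k : Fin 7) (x : Fin 3 → ℝ) : ℝ := cB k + (cC k 0 * x 0 + cC k 1 * x 1 + cC k 2 * x 2)
def rU (e : Fin 15) : Fin 3 → ℝ := fun i => (cU e i : ℝ)
def rW (e : Fin 15) : Fin 3 → ℝ := fun i => (cW e i : ℝ)

lemma cG_U (k e) : cG k (rU e) = (cGi k (cU e) : ℝ) := by
  simp [cG, cGi, rU]
lemma cG_W (k e) : cG k (rW e) = (cGi k (cW e) : ℝ) := by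
  simp [cG, cGi, rW]
lemma dU : ∀ e k, 0 ≤ cGi k (cU e) := by decide
lemma dW : ∀ e k, 0 ≤ cGi k (cW e) := by decide
/-- distinct edges have distinct active sets -/
lemma dInj : ∀ e e', (∀ k, (cGi k (cU e) = 0 ∧ cGi k (cW e) = 0) ↔
    (cGi k (cU e') = 0 ∧ cGi k (cW e') = 0)) → e = e' := by decide +kernel

def ePt (e : Fin 15) (s : ℝ) : Fin 3 → ℝ := fun i => rU e i + s * (rW e i - rU e i)

lemma cG_ePt (k e s) : cG k (ePt e s) = (1 - s) * cG k (rU e) + s * cG k (rW e) := by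
  simp only [cG, ePt]; ring

lemma cG_ePt_nonneg (k e) (s : ℝ) (h0 : 0 ≤ s) (h1 : s ≤ 1) : 0 ≤ cG k (ePt e s) := by
  have hu : (0:ℝ) ≤ cGi k (cU e) := by exact_mod_cast dU e k
  have hw : (0:ℝ) ≤ cGi k (cW e) := by exact_mod_cast dW e k
  rw [cG_ePt, cG_U, cG_W]
  have : 0 ≤ 1 - s := by linarith
  positivity

lemma cG_ePt_zero (k e) (s : ℝ) (h0 : 0 < s) (h1 : s < 1) :
    cG k (ePt e s) = 0 ↔ (cGi k (cU e) = 0 ∧ cGi k (cW e) = 0) := by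
  have hu : (0:ℝ) ≤ cGi k (cU e) := by exact_mod_cast dU e k
  have hw : (0:ℝ) ≤ cGi k (cW e) := by exact_mod_cast dW e k
  have h2 : 0 < 1 - s := by linarith
  rw [cG_ePt, cG_U, cG_W, add_eq_zero_iff_of_nonneg (by positivity) (by positivity),
    mul_eq_zero, mul_eq_zero]
  simp [h0.ne', h2.ne']

set_option maxHeartbeats 4000000 in
lemma edge_of_two (x : Fin 3 → ℝ) (hx : ∀ k, 0 ≤ cG k x) (k l : Fin 7) (hkl : k < l)
    (hk : cG k x = 0) (hl : cG l x = 0) : ∃ e s, 0 ≤ s ∧ s ≤ 1 ∧ x = ePt e s := by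
  have h0 := hx 0
  have h1 := hx 1
  have h2 := hx 2
  have h3 := hx 3
  have h4 := hx 4
  have h5 := hx 5
  have h6 := hx 6
  clear hx
  simp [cG, cB, cC] at h0 h1 h2 h3 h4 h5 h6
  have key : ∀ e s, 0 ≤ s → s ≤ 1 → x 0 = ePt e s 0 → x 1 = ePt e s 1 → x 2 = ePt e s 2 →
      ∃ e s, 0 ≤ s ∧ s ≤ 1 ∧ x = ePt e s := by
    intro e s a b c d f
    refine ⟨e, s, a, b, ?_⟩
    ext i; fin_cases i <;> assumption
  fin_cases k <;> fin_cases l <;> first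
    | exact absurd hkl (by decide)
    | (simp [cG, cB, cC] at hk hl
       first
       | (exfalso; linarith)
       | (apply key 0 (x 2 / 2) <;> (try simp [ePt, rU, rW, cU, cW]) <;> linarith)
       | (apply key 1 (x 1 / 2) <;> (try simp [ePt, rU, rW, cU, cW]) <;> linarith)
       | (apply key 2 (x 0 / 2) <;> (try simp [ePt, rU, rW, cU, cW]) <;> linarith)
       | (apply key 3 (x 2) <;> (try simp [ePt, rU, rW, cU, cW]) <;> linarith)
       | (apply key 4 (x 1) <;> (try simp [ePt, rU, rW, cU, cW]) <;> linarith)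
       | (apply key 5 (x 2) <;> (try simp [ePt, rU, rW, cU, cW]) <;> linarith)
       | (apply key 6 (x 0) <;> (try simp [ePt, rU, rW, cU, cW]) <;> linarith)
       | (apply key 7 (x 1) <;> (try simp [ePt, rU, rW, cU, cW]) <;> linarith)
       | (apply key 8 (x 0) <;> (try simp [ePt, rU, rW, cU, cW]) <;> linarith)
       | (apply key 9 (x 2) <;> (try simp [ePt, rU, rW, cU, cW]) <;> linarith)
       | (apply key 10 (x 2) <;> (try simp [ePt, rU, rW, cU, cW]) <;> linarith)
       | (apply key 11 (x 1) <;> (try simp [ePt, rU, rW, cU, cW]) <;> linarith)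
       | (apply key 12 (x 2 - 1) <;> (try simp [ePt, rU, rW, cU, cW]) <;> linarith)
       | (apply key 13 (x 2 - 1) <;> (try simp [ePt, rU, rW, cU, cW]) <;> linarith)
       | (apply key 14 (x 1 - 1) <;> (try simp [ePt, rU, rW, cU, cW]) <;> linarith))

/-- points with all active constraints proportional to one constraint are not extreme -/
lemma not_extreme (z x : Fin 3 → ℝ) (hx : ∀ k, 0 ≤ cG k x) (k0 : Fin 7)
    (h : ∀ k, cG k x = 0 → k = k0) :
    x ∉ Set.extremePoints ℝ ({x | ∀ k, 0 ≤ cG k x} ∩ {y | dotp z y = dotp z x}) := by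
  intro hext
  obtain ⟨d, hd0, hdz, hdk⟩ : ∃ d : Fin 3 → ℝ, d ≠ 0 ∧ dotp z d = 0 ∧
      cC k0 0 * d 0 + cC k0 1 * d 1 + cC k0 2 * d 2 = 0 := by
    let M : Matrix (Fin 2) (Fin 3) ℝ := Matrix.of ![z, fun i => (cC k0 i : ℝ)]
    have := LinearMap.ker_ne_bot_of_finrank_lt (f := Matrix.mulVecLin M) (by simp)
    obtain ⟨d, hd, hd0⟩ := Submodule.exists_mem_ne_zero_of_ne_bot this
    refine ⟨d, hd0, ?_, ?_⟩
    · have := congrFun (LinearMap.mem_ker.1 hd) 0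
      simpa [M, Matrix.mulVec, dotProduct, dotp] using this
    · have := congrFun (LinearMap.mem_ker.1 hd) 1
      simpa [M, Matrix.mulVec, dotProduct, Fin.sum_univ_three] using this
  have hcont : ∀ k, Continuous (fun e : ℝ => cG k (x + e • d)) := by
    intro k; simp only [cG, Pi.add_apply, Pi.smul_apply, smul_eq_mul]; fun_prop
  have hev : ∀ k, ∀ᶠ e in nhds (0:ℝ), 0 ≤ cG k (x + e • d) := by
    intro k
    by_cases hk : cG k x = 0
    · obtain rfl := h k hk
      refine Filter.Eventually.of_forall fun e => ?_
      have : cG k (x + e • d) = cG k x + e * (cC k 0 * d 0 + cC k 1 * d 1 + cC k 2 * d 2) := by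
        simp only [cG, Pi.add_apply, Pi.smul_apply, smul_eq_mul]; ring
      rw [this, hdk, hk]; simp
    · have hpos : 0 < cG k x := lt_of_le_of_ne (hx k) (Ne.symm hk)
      have := (hcont k).continuousAt (x := 0)
      have h2 : ∀ᶠ e in nhds (0:ℝ), 0 < cG k (x + e • d) :=
        this.eventually (lt_mem_nhds (by simpa using hpos))
      exact h2.mono fun e he => he.le
  have hall := Filter.eventually_all.2 hev
  obtain ⟨r, hr, hball⟩ := Metric.eventually_nhds_iff.1 hall
  have hp := hball (y := r / 2) (by simp [abs_of_pos hr]; linarith)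
  have hm := hball (y := -(r / 2)) (by simp [abs_of_pos hr]; linarith)
  have hzz : ∀ e : ℝ, dotp z (x + e • d) = dotp z x := by
    intro e
    have : dotp z (x + e • d) = dotp z x + e * dotp z d := by
      simp only [dotp, Fin.sum_univ_three, Pi.add_apply, Pi.smul_apply, smul_eq_mul]; ring
    rw [this, hdz]; simp
  have := hext.2 (x₁ := x + (r/2) • d) ⟨hp, hzz _⟩ (x₂ := x + (-(r/2)) • d) ⟨hm, hzz _⟩
    ⟨1/2, 1/2, by norm_num, by norm_num, by norm_num, by
      ext i; simp; ring⟩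
  have h3 : (r/2) • d = 0 := by simpa using this
  rcases smul_eq_zero.1 h3 with h4 | h4
  · linarith
  · exact hd0 h4

lemma dotp_ePt (z e s) : dotp z (ePt e s) =
    dotp z (rU e) + s * (dotp z (rW e) - dotp z (rU e)) := by
  simp only [dotp, ePt, Fin.sum_univ_three]; ring

def cross (z : Fin 3 → ℝ) (e : Fin 15) : Set ℝ :=
  Set.Ioo (min (dotp z (rU e)) (dotp z (rW e))) (max (dotp z (rU e)) (dotp z (rW e)))

def eS (z : Fin 3 → ℝ) (t : ℝ) (e : Fin 15) : ℝ :=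
  (t - dotp z (rU e)) / (dotp z (rW e) - dotp z (rU e))

lemma cross_ne {z t e} (h : t ∈ cross z e) : dotp z (rW e) - dotp z (rU e) ≠ 0 := by
  intro h0
  have : dotp z (rW e) = dotp z (rU e) := by linarith
  simp [cross, this] at h

lemma cross_iff (z t e) : t ∈ cross z e ↔
    ∃ s, 0 < s ∧ s < 1 ∧ t = dotp z (rU e) + s * (dotp z (rW e) - dotp z (rU e)) ∧
      dotp z (rW e) - dotp z (rU e) ≠ 0 := by
  constructor
  · intro h
    have hne := cross_ne h
    refine ⟨eS z t e, ?_, ?_, ?_, hne⟩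
    · rcases lt_or_gt_of_ne hne with h1 | h1
      · have h2 : dotp z (rW e) ≤ dotp z (rU e) := by linarith
        simp [cross, h2] at h
        exact div_pos_of_neg_of_neg (by linarith) h1
      · have h2 : dotp z (rU e) ≤ dotp z (rW e) := by linarith
        simp [cross, h2] at h
        exact div_pos (by linarith) h1
    · rcases lt_or_gt_of_ne hne with h1 | h1
      · have h2 : dotp z (rW e) ≤ dotp z (rU e) := by linarith
        simp [cross, h2] at h
        rw [eS, div_lt_one_of_neg h1]; linarith
      · have h2 : dotp z (rU e) ≤ dotp z (rW e) := by linarith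
        simp [cross, h2] at h
        rw [eS, div_lt_one h1]; linarith
    · rw [eS, div_mul_cancel₀ _ hne]; ring
  · rintro ⟨s, h0, h1, rfl, hne⟩
    rcases lt_or_gt_of_ne hne with h3 | h3
    · have h2 : dotp z (rW e) ≤ dotp z (rU e) := by linarith
      simp only [cross, h2, min_eq_right, max_eq_left, Set.mem_Ioo]
      constructor <;> nlinarith
    · have h2 : dotp z (rU e) ≤ dotp z (rW e) := by linarith
      simp only [cross, h2, min_eq_left, max_eq_right, Set.mem_Ioo]
      constructor <;> nlinarith

lemma eS_eq {z e} (s : ℝ) (hne : dotp z (rW e) - dotp z (rU e) ≠ 0) :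
    eS z (dotp z (rU e) + s * (dotp z (rW e) - dotp z (rU e))) e = s := by
  rw [eS]; field_simp; ring

set_option maxHeartbeats 4000000 in
/-- active constraints of an edge determine its line -/
lemma edge_line (e : Fin 15) (y : Fin 3 → ℝ)
    (h : ∀ k, cGi k (cU e) = 0 ∧ cGi k (cW e) = 0 → cG k y = 0) : ∃ s, y = ePt e s := by
  have key : ∀ s, y 0 = ePt e s 0 → y 1 = ePt e s 1 → y 2 = ePt e s 2 →
      ∃ s, y = ePt e s := by
    intro s a b c
    refine ⟨s, ?_⟩
    ext i; fin_cases i <;> assumption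
  have h0 := h 0
  have h1 := h 1
  have h2 := h 2
  have h3 := h 3
  have h4 := h 4
  have h5 := h 5
  have h6 := h 6
  clear h
  fin_cases e <;> simp [cG, cGi, cU, cW, cB, cC] at h0 h1 h2 h3 h4 h5 h6 <;> first
    | (apply key (y 0 / 2) <;> (try simp [ePt, rU, rW, cU, cW]) <;> linarith)
    | (apply key (y 1 / 2) <;> (try simp [ePt, rU, rW, cU, cW]) <;> linarith)
    | (apply key (y 2 / 2) <;> (try simp [ePt, rU, rW, cU, cW]) <;> linarith)
    | (apply key (y 0) <;> (try simp [ePt, rU, rW, cU, cW]) <;> linarith)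
    | (apply key (y 1) <;> (try simp [ePt, rU, rW, cU, cW]) <;> linarith)
    | (apply key (y 2) <;> (try simp [ePt, rU, rW, cU, cW]) <;> linarith)
    | (apply key (y 1 - 1) <;> (try simp [ePt, rU, rW, cU, cW]) <;> linarith)
    | (apply key (y 2 - 1) <;> (try simp [ePt, rU, rW, cU, cW]) <;> linarith)

open Classical in
lemma ext_eq (z : Fin 3 → ℝ) (t : ℝ) (hU : ∀ e, t ≠ dotp z (rU e)) (hW : ∀ e, t ≠ dotp z (rW e)) :
    Set.extremePoints ℝ ({x | ∀ k, 0 ≤ cG k x} ∩ {y | dotp z y = t}) =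
      (fun e => ePt e (eS z t e)) '' {e | t ∈ cross z e} := by
  ext x
  constructor
  · intro hx
    obtain ⟨hxP, hxt⟩ := hx.1
    simp only [Set.mem_ofPred_eq] at hxP hxt
    have : ∃ k l : Fin 7, k < l ∧ cG k x = 0 ∧ cG l x = 0 := by
      by_contra hcon
      push Not at hcon
      by_cases hact : ∃ k0, cG k0 x = 0
      · obtain ⟨k0, hk0⟩ := hact
        refine not_extreme z x hxP k0 (fun k hk => ?_) (by rw [hxt]; exact hx)
        rcases lt_trichotomy k k0 with h | h | h
        · exact absurd hk0 (hcon _ _ h hk)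
        · exact h
        · exact absurd hk (hcon _ _ h hk0)
      · exact not_extreme z x hxP 0 (fun k hk => absurd ⟨k, hk⟩ hact) (by rw [hxt]; exact hx)
    obtain ⟨k, l, hkl, hk, hl⟩ := this
    obtain ⟨e, s, h0, h1, rfl⟩ := edge_of_two x hxP k l hkl hk hl
    rw [dotp_ePt] at hxt
    have hs0 : s ≠ 0 := by rintro rfl; apply hU e; linarith
    have hs1 : s ≠ 1 := by rintro rfl; apply hW e; linarith
    have hne : dotp z (rW e) - dotp z (rU e) ≠ 0 := by
      intro h; rw [h] at hxt; apply hU e; linarith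
    refine ⟨e, (cross_iff z t e).2 ⟨s, lt_of_le_of_ne h0 hs0.symm, lt_of_le_of_ne h1 hs1,
      hxt.symm, hne⟩, ?_⟩
    simp only
    rw [← hxt, eS_eq s hne]
  · rintro ⟨e, he, rfl⟩
    obtain ⟨s, h0, h1, rfl, hne⟩ := (cross_iff z t e).1 he
    simp only [eS_eq s hne]
    refine ⟨⟨fun k => cG_ePt_nonneg k e s h0.le h1.le, dotp_ePt z e s⟩, ?_⟩
    rintro y ⟨hyP, hyt⟩ w ⟨hwP, hwt⟩ ⟨a, b, ha, hb, hab, hxy⟩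
    have hact : ∀ k, cGi k (cU e) = 0 ∧ cGi k (cW e) = 0 → cG k y = 0 := by
      intro k hk
      rw [← cG_ePt_zero k e s h0 h1, ← hxy] at hk
      have hlin : cG k (a • y + b • w) = a * cG k y + b * cG k w := by
        have hb' : b = 1 - a := by linarith
        subst hb'
        simp only [cG, Pi.add_apply, Pi.smul_apply, smul_eq_mul]; ring
      rw [hlin] at hk
      have h3 := hyP k
      have h4 := hwP k
      have := mul_nonneg ha.le h3
      have := mul_nonneg hb.le h4
      have h5 : a * cG k y = 0 := by linarith
      exact (mul_eq_zero.1 h5).resolve_left ha.ne'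
    obtain ⟨s', rfl⟩ := edge_line e y hact
    simp only [Set.mem_ofPred_eq, dotp_ePt] at hyt
    have : (s' - s) * (dotp z (rW e) - dotp z (rU e)) = 0 := by linarith
    have h6 := (mul_eq_zero.1 this).resolve_right hne
    rw [show s' = s by linarith]

lemma ext_inj (z t) : Set.InjOn (fun e => ePt e (eS z t e)) {e | t ∈ cross z e} := by
  intro e he e' he' heq
  obtain ⟨s, h0, h1, hs, hne⟩ := (cross_iff z t e).1 he
  obtain ⟨s', h0', h1', hs', hne'⟩ := (cross_iff z t e').1 he'
  have e1 : eS z t e = s := by rw [hs, eS_eq s hne]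
  have e2 : eS z t e' = s' := by rw [hs', eS_eq s' hne']
  simp only [e1, e2] at heq
  apply dInj
  intro k
  rw [← cG_ePt_zero k e s h0 h1, ← cG_ePt_zero k e' s' h0' h1', heq]

open Classical in
lemma nVert_eq (z : Fin 3 → ℝ) (t : ℝ) (hU : ∀ e, t ≠ dotp z (rU e))
    (hW : ∀ e, t ≠ dotp z (rW e)) :
    (nVert ({x | ∀ k, 0 ≤ cG k x} ∩ {y | dotp z y = t}) : ℝ) =
      ∑ e, (cross z e).indicator (fun _ => (1:ℝ)) t := by
  rw [nVert, ext_eq z t hU hW, (ext_inj z t).ncard_image, Set.ncard_eq_toFinset_card']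
  simp [Set.indicator_apply]

lemma mem_tri {u v : Fin 3 → ℝ} (p q : ℝ) (hp : 0 ≤ p) (hq : 0 ≤ q) (h : p + q ≤ 1) :
    p • u + q • v ∈ convexHull ℝ ({0, u, v} : Set (Fin 3 → ℝ)) := by
  have := (convex_convexHull ℝ ({0, u, v} : Set (Fin 3 → ℝ))).sum_mem (t := Finset.univ)
    (w := ![1 - p - q, p, q]) (z := ![0, u, v])
    (by intro i _; fin_cases i <;> simp <;> linarith)
    (by simp [Fin.sum_univ_three]; ring)
    (by intro i _; apply subset_convexHull; fin_cases i <;> simp)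
  simpa [Fin.sum_univ_three] using this

lemma tri_sub {u v : Fin 3 → ℝ} {x : Fin 3 → ℝ}
    (hx : x ∈ convexHull ℝ ({0, u, v} : Set (Fin 3 → ℝ))) :
    ∃ p q : ℝ, 0 ≤ p ∧ 0 ≤ q ∧ p + q ≤ 1 ∧ x = p • u + q • v := by
  rw [convexHull_insert (by simp), convexHull_pair, mem_convexJoin] at hx
  obtain ⟨a, ha, b, ⟨c, d, hc, hd, hcd, rfl⟩, ⟨r, s, hr, hs, hrs, rfl⟩⟩ := hx
  obtain rfl := ha
  refine ⟨s * c, s * d, by positivity, by positivity, ?_, ?_⟩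
  · rw [← mul_add, hcd]; linarith
  · simp [smul_smul]

lemma P_eq (f : Fin 3 → (Fin 3 → ℝ))
    (hf : ∀ i, f i = fun j => if j = i then 1 else 0) :
    convexHull ℝ {0, f 1, f 2} + convexHull ℝ {0, f 0, f 2} +
      convexHull ℝ {0, f 0, f 1} = {x | ∀ k, 0 ≤ cG k x} := by
  ext x
  constructor
  · rintro ⟨_, ⟨a, ha, b, hb, rfl⟩, c, hc, rfl⟩
    obtain ⟨p, q, h1, h2, h3, rfl⟩ := tri_sub ha
    obtain ⟨p', q', h1', h2', h3', rfl⟩ := tri_sub hb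
    obtain ⟨p'', q'', h1'', h2'', h3'', rfl⟩ := tri_sub hc
    intro k
    fin_cases k <;> simp [cG, cB, cC, hf] <;> linarith
  · intro hx
    have h0 := hx 0
    have h1 := hx 1
    have h2 := hx 2
    have h3 := hx 3
    have h4 := hx 4
    have h5 := hx 5
    have h6 := hx 6
    clear hx
    simp [cG, cB, cC] at h0 h1 h2 h3 h4 h5 h6
    obtain ⟨r, r1, r2, r3, r4, r5, r6⟩ : ∃ r, 0 ≤ r ∧ x 0 - 1 ≤ r ∧ x 0 + x 1 - 2 ≤ r ∧ r ≤ 1 ∧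
        r ≤ x 0 ∧ r ≤ 2 - x 2 := by
      refine ⟨max 0 (max (x 0 - 1) (x 0 + x 1 - 2)), by simp, by simp, by simp, ?_, ?_, ?_⟩ <;>
      refine max_le ?_ (max_le ?_ ?_) <;> linarith
    obtain ⟨p, p1, p2, p3, p4⟩ : ∃ p, 0 ≤ p ∧ p ≤ x 1 ∧ p ≤ 1 - x 0 + r ∧
        (p = x 1 ∨ p = 1 - x 0 + r) :=
      ⟨min (x 1) (1 - x 0 + r), le_min (by linarith) (by linarith), min_le_left _ _,
        min_le_right _ _, min_choice _ _⟩
    obtain ⟨q, q1, q2, q3, q4⟩ : ∃ q, 0 ≤ q ∧ q ≤ x 2 ∧ q ≤ 1 - r ∧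
        (q = x 2 ∨ q = 1 - r) :=
      ⟨min (x 2) (1 - r), le_min (by linarith) (by linarith), min_le_left _ _,
        min_le_right _ _, min_choice _ _⟩
    refine ⟨_, ⟨_, mem_tri (x 1 - p) (x 2 - q) (by linarith) (by linarith) ?_, _,
      mem_tri r q r1 q1 (by linarith), rfl⟩, _, mem_tri (x 0 - r) p (by linarith) p1
        (by linarith), ?_⟩
    · rcases p4 with p4 | p4 <;> rcases q4 with q4 | q4 <;> linarith
    · ext i; fin_cases i <;> simp [hf]

lemma dotp_add (z x y : Fin 3 → ℝ) : dotp z (x + y) = dotp z x + dotp z y := by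
  simp only [dotp, Fin.sum_univ_three, Pi.add_apply]; ring

lemma tri_max (z u v : Fin 3 → ℝ) :
    IsGreatest (dotp z '' convexHull ℝ ({0, u, v} : Set (Fin 3 → ℝ)))
      (max 0 (max (dotp z u) (dotp z v))) := by
  constructor
  · have hz : dotp z 0 = 0 := by simp [dotp]
    rcases max_choice (0:ℝ) (max (dotp z u) (dotp z v)) with h | h
    · rw [h]; exact ⟨0, subset_convexHull _ _ (by simp), hz⟩
    · rw [h]
      rcases max_choice (dotp z u) (dotp z v) with h | h
      · rw [h]; exact ⟨u, subset_convexHull _ _ (by simp), rfl⟩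
      · rw [h]; exact ⟨v, subset_convexHull _ _ (by simp), rfl⟩
  · rintro _ ⟨x, hx, rfl⟩
    obtain ⟨p, q, hp, hq, hpq, rfl⟩ := tri_sub hx
    have h1 : dotp z (p • u + q • v) = p * dotp z u + q * dotp z v := by
      simp only [dotp, Fin.sum_univ_three, Pi.add_apply, Pi.smul_apply, smul_eq_mul]; ring
    rw [h1]
    set M := max 0 (max (dotp z u) (dotp z v))
    have a0 : 0 ≤ M := le_max_left _ _
    have a1 : dotp z u ≤ M := (le_max_left _ _).trans (le_max_right _ _)
    have a2 : dotp z v ≤ M := (le_max_right _ _).trans (le_max_right _ _)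
    nlinarith [mul_le_mul_of_nonneg_left a1 hp, mul_le_mul_of_nonneg_left a2 hq]

lemma tri_min (z u v : Fin 3 → ℝ) :
    IsLeast (dotp z '' convexHull ℝ ({0, u, v} : Set (Fin 3 → ℝ)))
      (min 0 (min (dotp z u) (dotp z v))) := by
  constructor
  · have hz : dotp z 0 = 0 := by simp [dotp]
    rcases min_choice (0:ℝ) (min (dotp z u) (dotp z v)) with h | h
    · rw [h]; exact ⟨0, subset_convexHull _ _ (by simp), hz⟩
    · rw [h]
      rcases min_choice (dotp z u) (dotp z v) with h | h
      · rw [h]; exact ⟨u, subset_convexHull _ _ (by simp), rfl⟩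
      · rw [h]; exact ⟨v, subset_convexHull _ _ (by simp), rfl⟩
  · rintro _ ⟨x, hx, rfl⟩
    obtain ⟨p, q, hp, hq, hpq, rfl⟩ := tri_sub hx
    have h1 : dotp z (p • u + q • v) = p * dotp z u + q * dotp z v := by
      simp only [dotp, Fin.sum_univ_three, Pi.add_apply, Pi.smul_apply, smul_eq_mul]; ring
    rw [h1]
    set M := min 0 (min (dotp z u) (dotp z v))
    have a0 : M ≤ 0 := min_le_left _ _
    have a1 : M ≤ dotp z u := (min_le_right _ _).trans (min_le_left _ _)
    have a2 : M ≤ dotp z v := (min_le_right _ _).trans (min_le_right _ _)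
    nlinarith [mul_le_mul_of_nonneg_left a1 hp, mul_le_mul_of_nonneg_left a2 hq]

lemma dsum_max (z : Fin 3 → ℝ) {A B : Set (Fin 3 → ℝ)} {a b : ℝ}
    (hA : IsGreatest (dotp z '' A) a) (hB : IsGreatest (dotp z '' B) b) :
    IsGreatest (dotp z '' (A + B)) (a + b) := by
  obtain ⟨⟨x, hx, rfl⟩, hA⟩ := hA
  obtain ⟨⟨y, hy, rfl⟩, hB⟩ := hB
  refine ⟨⟨x + y, Set.add_mem_add hx hy, dotp_add _ _ _⟩, ?_⟩
  rintro _ ⟨_, ⟨p, hp, q, hq, rfl⟩, rfl⟩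
  simp only [dotp_add]
  exact add_le_add (hA ⟨p, hp, rfl⟩) (hB ⟨q, hq, rfl⟩)

lemma dsum_min (z : Fin 3 → ℝ) {A B : Set (Fin 3 → ℝ)} {a b : ℝ}
    (hA : IsLeast (dotp z '' A) a) (hB : IsLeast (dotp z '' B) b) :
    IsLeast (dotp z '' (A + B)) (a + b) := by
  obtain ⟨⟨x, hx, rfl⟩, hA⟩ := hA
  obtain ⟨⟨y, hy, rfl⟩, hB⟩ := hB
  refine ⟨⟨x + y, Set.add_mem_add hx hy, dotp_add _ _ _⟩, ?_⟩
  rintro _ ⟨_, ⟨p, hp, q, hq, rfl⟩, rfl⟩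
  simp only [dotp_add]
  exact add_le_add (hA ⟨p, hp, rfl⟩) (hB ⟨q, hq, rfl⟩)

lemma width (a b : ℝ) : max 0 (max a b) - min 0 (min a b) = (|a| + |b| + |a - b|) / 2 := by
  rcases le_total a b with h | h <;> rcases le_total 0 a with ha | ha <;>
  rcases le_total 0 b with hb | hb <;>
  simp only [abs_of_nonneg, abs_of_nonpos, ha, hb, h, sub_nonneg, sub_nonpos, max_eq_left,
    max_eq_right, min_eq_left, min_eq_right] <;> linarith

lemma sum_edges (z : Fin 3 → ℝ) : ∑ e, |dotp z (rW e) - dotp z (rU e)| =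
    4 * (|z 0| + |z 1| + |z 2|) + 2 * (|z 1 - z 2| + |z 0 - z 2| + |z 0 - z 1|) := by
  have a2 : ∀ x : ℝ, |x * 2| = 2 * |x| := by intro x; rw [abs_mul]; norm_num; ring
  simp [Fin.sum_univ_succ, dotp, rU, rW, cU, cW, a2]
  have e1 : |z 2 - z 1| = |z 1 - z 2| := abs_sub_comm _ _
  have e2 : |z 2 - z 0| = |z 0 - z 2| := abs_sub_comm _ _
  have e3 : |z 1 - z 0| = |z 0 - z 1| := abs_sub_comm _ _
  rw [show z 1 * 2 + z 2 - (z 0 + z 1 * 2) = z 2 - z 0 by ring,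
    show z 1 + z 2 * 2 - (z 1 * 2 + z 2) = z 2 - z 1 by ring,
    show z 0 + z 2 * 2 - (z 0 * 2 + z 2) = z 2 - z 0 by ring,
    show z 0 + z 1 * 2 - (z 0 * 2 + z 1) = z 1 - z 0 by ring]
  linarith

/-- Example 5.3. For the standard basis vectors `f₁, f₂, f₃` of `ℝ³`,
the triangles `T₁ = conv{0,f₂,f₃}`, `T₂ = conv{0,f₁,f₃}`, `T₃ = conv{0,f₁,f₂}` and
`P = T₁ + T₂ + T₃`, one has `A(P,z) = 4` for every nonzero `z`. -/
theorem avgVert_triangleSum_eq_four (f : Fin 3 → (Fin 3 → ℝ))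
    (hf : ∀ i, f i = fun j => if j = i then 1 else 0)
    (P : Set (Fin 3 → ℝ))
    (hP : P = convexHull ℝ {0, f 1, f 2} + convexHull ℝ {0, f 0, f 2} +
      convexHull ℝ {0, f 0, f 1})
    (z : Fin 3 → ℝ) (hz : z ≠ 0) :
    avgVert P z = 4 := by
  have hfz : ∀ i, dotp z (f i) = z i := by intro i; simp [dotp, hf]
  have hmax := dsum_max z (dsum_max z (tri_max z (f 1) (f 2)) (tri_max z (f 0) (f 2)))
    (tri_max z (f 0) (f 1))
  have hmin := dsum_min z (dsum_min z (tri_min z (f 1) (f 2)) (tri_min z (f 0) (f 2)))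
    (tri_min z (f 0) (f 1))
  rw [← hP] at hmax hmin
  have hT : tMax P z = _ := hmax.csSup_eq
  have ht : tMin P z = _ := hmin.csInf_eq
  have hsum := sum_edges z
  have hw : 4 * (tMax P z - tMin P z) = ∑ e, |dotp z (rW e) - dotp z (rU e)| := by
    rw [hsum, hT, ht]
    simp only [hfz]
    linarith [width (z 1) (z 2), width (z 0) (z 2), width (z 0) (z 1)]
  have hpos : 0 < tMax P z - tMin P z := by
    obtain ⟨i, hi⟩ := Function.ne_iff.1 hz
    have hi' : 0 < |z i| := abs_pos.2 hi
    have : 0 < |z 0| + |z 1| + |z 2| := by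
      have := abs_nonneg (z 0)
      have := abs_nonneg (z 1)
      have := abs_nonneg (z 2)
      fin_cases i <;> simp only [Fin.zero_eta, Fin.mk_one, Fin.reduceFinMk] at hi' <;> linarith
    linarith [abs_nonneg (z 1 - z 2), abs_nonneg (z 0 - z 2), abs_nonneg (z 0 - z 1)]
  have hPe : P = {x | ∀ k, 0 ≤ cG k x} := by rw [hP, P_eq f hf]
  have hPU : ∀ e, rU e ∈ P := by
    intro e; rw [hPe]; intro k; rw [cG_U]; exact_mod_cast dU e k
  have hPW : ∀ e, rW e ∈ P := by
    intro e; rw [hPe]; intro k; rw [cG_W]; exact_mod_cast dW e k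
  have hle : ∀ x ∈ P, dotp z x ≤ tMax P z := fun x hx => by
    rw [hT]; exact hmax.2 ⟨x, hx, rfl⟩
  have hge : ∀ x ∈ P, tMin P z ≤ dotp z x := fun x hx => by
    rw [ht]; exact hmin.2 ⟨x, hx, rfl⟩
  have hint : ∫ t in tMin P z..tMax P z, ((nVert (P ∩ {x | dotp z x = t}) : ℝ)) =
      ∑ e, |dotp z (rW e) - dotp z (rU e)| := by
    have hae : ∀ᵐ t : ℝ, t ∈ Set.uIoc (tMin P z) (tMax P z) →
        ((nVert (P ∩ {x | dotp z x = t}) : ℝ)) =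
        ∑ e, (cross z e).indicator (fun _ => (1:ℝ)) t := by
      have hfin : (Set.range (fun e => dotp z (rU e)) ∪
          Set.range (fun e => dotp z (rW e))).Finite :=
        (Set.finite_range _).union (Set.finite_range _)
      have := hfin.countable.ae_notMem (volume : Measure ℝ)
      filter_upwards [this] with t ht _
      rw [hPe]
      refine nVert_eq z t (fun e h => ht (Or.inl ⟨e, h.symm⟩)) (fun e h => ht (Or.inr ⟨e, h.symm⟩))
    rw [intervalIntegral.integral_congr_ae hae, intervalIntegral.integral_of_le (by linarith),
      integral_finsetSum]
    · refine Finset.sum_congr rfl fun e _ => ?_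
      have hsub : cross z e ⊆ Set.Ioc (tMin P z) (tMax P z) := by
        intro t h
        exact ⟨lt_of_le_of_lt (le_min (hge _ (hPU e)) (hge _ (hPW e))) h.1,
          h.2.le.trans (max_le (hle _ (hPU e)) (hle _ (hPW e)))⟩
      rw [setIntegral_indicator (show MeasurableSet (cross z e) from measurableSet_Ioo), Set.inter_eq_right.2 hsub]
      simp [cross, max_sub_min_eq_abs]
    · intro e _
      exact (integrable_const (1:ℝ)).indicator measurableSet_Ioo
  rw [avgVert, hint, ← hw]
  field_simp
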